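/- Let d ≥ 2. There exist ε_0 ∈ (0,1), functions C_1 : [1,∞] × [1,∞] → (0,∞) and C_2 : [1,∞] → (0,∞), and linear operators S_{R,ε} : ℝ^{∂D_R} → ℝ^{∂D_R} for ε ∈ (0,ε_0) and R ∈ ℕ, such that for all s ∈ [1,∞], r ∈ [s,∞], R ∈ ℕ, u : ∂D_R → ℝ, and ε ∈ (0,ε_0) (convention 1/∞ = 0): (i) ⦀S_{R,ε}u⦀_{r, ∂D_R} ≤ C_1(s,r) ε^{−(d−1)(1/s − 1/r)} ⦀u⦀_{s, ∂D_R}; (ii) ⦀∇̄(S_{R,ε}u)⦀_{r, E_R^{tan}} ≤ C_1(s,r) ε^{−(d−1)(1/s − 1/r)} ⦀∇̄u⦀_{s, E_R^{tan}}; (iii) ⦀u − S_{R,ε}u⦀_{s, ∂D_R} ≤ C_2(s) ε R ⦀∇̄u⦀_{s, E_R^{tan}}. -/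

import Mathlib

open MeasureTheory Filter
open scoped ENNReal Classical

noncomputable section

/-- Points of the lattice `ℤ^d`. -/
abbrev Zd (d : ℕ) := Fin d → ℤ

/-- The `i`-th standard unit vector of `ℤ^d`. -/
def unitVec {d : ℕ} (i : Fin d) : Zd d := fun j => if j = i then 1 else 0

/-- Environments: a positive conductance for every (unoriented nearest-neighbour) edge,
where the edge `{x, x + e i}` is encoded by the pair `(x, i)`. -/
abbrev Env (d : ℕ) := ((Fin d → ℤ) × Fin d) → {r : ℝ // 0 < r}

/-- The conductance of the edge `{x, x + e i}` in the environment `ω`, as a real number. -/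
def cval {d : ℕ} (ω : Env d) (x : Zd d) (i : Fin d) : ℝ := (ω (x, i)).1

/-- Nearest-neighbour adjacency on `ℤ^d`. -/
def Adj {d : ℕ} (x y : Zd d) : Prop :=
  ∃ i : Fin d, y = x + unitVec i ∨ x = y + unitVec i

/-- The conductance `ω_{xy}` between two nearest neighbours `x ∼ y` (and `0` otherwise). -/
def econd {d : ℕ} (ω : Env d) (x y : Zd d) : ℝ :=
  ∑ i : Fin d, ((if y = x + unitVec i then cval ω x i else 0)
    + (if x = y + unitVec i then cval ω y i else 0))

/-- Discrete gradient `(∇_i u)(x) = u(x+e_i) - u(x)`. -/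
def dGrad {d : ℕ} (i : Fin d) (f : Zd d → ℝ) (x : Zd d) : ℝ :=
  f (x + unitVec i) - f x

/-- Discrete backward gradient `(∇_i^* u)(x) = u(x-e_i) - u(x)`. -/
def dGradStar {d : ℕ} (i : Fin d) (f : Zd d → ℝ) (x : Zd d) : ℝ :=
  f (x - unitVec i) - f x

/-- Discrete divergence `(∇^* ⬝ F)(x) = ∑ i, (F_i(x-e_i) - F_i(x))`. -/
def divStar {d : ℕ} (F : Zd d → Fin d → ℝ) (x : Zd d) : ℝ :=
  ∑ i : Fin d, (F (x - unitVec i) i - F x i)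

/-- Discrete Laplacian `Δu = -∑ i, ∇_i^* ∇_i u`. -/
def lap {d : ℕ} (f : Zd d → ℝ) (x : Zd d) : ℝ :=
  - ∑ i : Fin d, dGradStar i (dGrad i f) x

/-- The open discrete box `D_R = {x : |x|_∞ < R}`. -/
def boxD (d R : ℕ) : Finset (Zd d) :=
  Fintype.piFinset fun _ => Finset.Ioo (-(R : ℤ)) (R : ℤ)

/-- The closed discrete box `D̄_R = {x : |x|_∞ ≤ R}`. -/
def boxC (d R : ℕ) : Finset (Zd d) :=
  Fintype.piFinset fun _ => Finset.Icc (-(R : ℤ)) (R : ℤ)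

/-- The discrete boundary `∂D_R = {x : |x|_∞ = R}`. -/
def bdry (d R : ℕ) : Finset (Zd d) := boxC d R \ boxD d R

/-- The reduced boundary `∂̃D_R` of points of `∂D_R` having a neighbour in `D_R`. -/
def tbdry (d R : ℕ) : Finset (Zd d) :=
  (bdry d R).filter fun x => ∃ y ∈ boxD d R, Adj x y

/-- The oriented edge set `E_R = {(x,y) : x ∼ y, |x+y|_∞ < 2R}`. -/
def ER (d R : ℕ) : Finset (Zd d × Zd d) :=
  ((boxC d R) ×ˢ (boxC d R)).filter fun e =>
    Adj e.1 e.2 ∧ ∀ i, |e.1 i + e.2 i| < 2 * (R : ℤ)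

/-- The normal edges `E_R^{nor} = {(x,y) : x ∈ D_R, y ∈ ∂D_R, x ∼ y}`. -/
def Enor (d R : ℕ) : Finset (Zd d × Zd d) :=
  ((boxD d R) ×ˢ (bdry d R)).filter fun e => Adj e.1 e.2

/-- The tangential edges `E_R^{tan} = {(x,y) : x, y ∈ ∂D_R, x ∼ y}`. -/
def Etan (d R : ℕ) : Finset (Zd d × Zd d) :=
  ((bdry d R) ×ˢ (bdry d R)).filter fun e => Adj e.1 e.2

/-- Normalized `ℓ^r` norm `⦀u⦀_{r,A}` on a finite set. -/
def avNorm {V : Type*} (r : ℝ) (A : Finset V) (u : V → ℝ) : ℝ :=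
  ((∑ x ∈ A, |u x| ^ r) / (A.card : ℝ)) ^ (1 / r)

/-- Sup norm `⦀u⦀_{∞,A}` on a finite set. -/
def supNorm {V : Type*} (A : Finset V) (u : V → ℝ) : ℝ :=
  ⨆ x ∈ A, |u x|

/-- Normalized `ℓ^r` norm for an extended exponent `r ∈ [1,∞]`. -/
def avNormE {V : Type*} (r : ℝ≥0∞) (A : Finset V) (u : V → ℝ) : ℝ :=
  if r = ∞ then supNorm A u else avNorm r.toReal A u

/-- The exponent `2p/(p-1)`, with the convention that it equals `2` for `p = ∞`. -/
def dualExp (p : ℝ≥0∞) : ℝ :=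
  if p = ∞ then 2 else 2 * p.toReal / (p.toReal - 1)

/-- The exponent `2p/(p+1)`, with the convention that it equals `2` for `p = ∞`. -/
def coExp (p : ℝ≥0∞) : ℝ :=
  if p = ∞ then 2 else 2 * p.toReal / (p.toReal + 1)

/-- Euclidean norm on `ℝ^d`. -/
def vecNorm {d : ℕ} (v : Fin d → ℝ) : ℝ := Real.sqrt (∑ i, v i ^ 2)

/-- The translation `τ_a` acting on environments. -/
def shiftEnv {d : ℕ} (a : Zd d) (ω : Env d) : Env d := fun e => ω (e.1 + a, e.2)

/-- Stationarity of a measure on environments. -/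
def Stationary {d : ℕ} (P : Measure (Env d)) : Prop :=
  ∀ a : Zd d, MeasurePreserving (shiftEnv a) P P

/-- Ergodicity of a measure on environments w.r.t. the translations. -/
def ErgodicEnv {d : ℕ} (P : Measure (Env d)) : Prop :=
  ∀ A : Set (Env d), MeasurableSet A → (∀ a : Zd d, shiftEnv a ⁻¹' A = A) →
    P A = 0 ∨ P A = 1

/-- Stationary (`Stat_P`) random fields. -/
def StatP {d : ℕ} {E : Type*} [MeasurableSpace E] (P : Measure (Env d))
    (f : Env d → Zd d → E) : Prop :=
  Measurable (Function.uncurry f) ∧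
    ∀ᵐ ω ∂P, ∀ x : Zd d, f ω x = f (shiftEnv x ω) 0

/-- The horizontal derivative `D_i` on functions of the environment. -/
def Dop {d : ℕ} (i : Fin d) (ζ : Env d → ℝ) : Env d → ℝ :=
  fun ω => ζ (shiftEnv (unitVec i) ω) - ζ ω

/-- The horizontal derivative `D_i^*` on functions of the environment. -/
def DopStar {d : ℕ} (i : Fin d) (ζ : Env d → ℝ) : Env d → ℝ :=
  fun ω => ζ (shiftEnv (-(unitVec i)) ω) - ζ ω

/-- The reflection of `ℤ^d` flipping the `j`-th coordinate. -/
def reflPt {d : ℕ} (j : Fin d) (x : Zd d) : Zd d := fun k => if k = j then -x k else x k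

/-- The reflection `ρ_j` acting on environments. -/
def reflEnv {d : ℕ} (j : Fin d) (ω : Env d) : Env d :=
  fun e => ω (if e.2 = j then reflPt j e.1 - unitVec j else reflPt j e.1, e.2)


theorem supNorm_le {V : Type*} {A : Finset V} {u : V → ℝ} {c : ℝ} (hc : 0 ≤ c)
    (h : ∀ x ∈ A, |u x| ≤ c) : supNorm A u ≤ c :=
  Real.iSup_le (fun x => Real.iSup_le (fun hx => h x hx) hc) hc

theorem abs_le_supNorm {V : Type*} {A : Finset V} {u : V → ℝ} {x : V} (hx : x ∈ A) :
    |u x| ≤ supNorm A u := by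
  have hb : BddAbove (Set.range fun y => ⨆ _ : y ∈ A, |u y|) := by
    refine ⟨∑ y ∈ A, |u y|, ?_⟩
    rintro _ ⟨y, rfl⟩
    exact Real.iSup_le
      (fun hy => Finset.single_le_sum (f := fun y => |u y|) (fun _ _ => abs_nonneg _) hy)
      (Finset.sum_nonneg fun _ _ => abs_nonneg _)
  calc |u x| = ⨆ _ : x ∈ A, |u x| := by simp [hx]
    _ ≤ _ := le_ciSup hb x

theorem supNorm_nonneg {V : Type*} (A : Finset V) (u : V → ℝ) : 0 ≤ supNorm A u :=
  Real.iSup_nonneg fun _ => Real.iSup_nonneg fun _ => abs_nonneg _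

theorem avNormE_empty {V : Type*} {r : ℝ≥0∞} (hr : 1 ≤ r) (u : V → ℝ) :
    avNormE r ∅ u = 0 := by
  unfold avNormE
  split_ifs with h
  · exact le_antisymm (supNorm_le le_rfl (by simp)) (supNorm_nonneg _ _)
  · have : 0 < r.toReal := ENNReal.toReal_pos (by positivity) h
    simp [avNorm, this.ne']

/-- A Schur test with gain of integrability for normalized norms on finite sets. -/
theorem avNorm_le_of_kernel {V W : Type*} {A : Finset V} {B : Finset W}
    (hA : A.Nonempty) (hB : B.Nonempty) {f : V → ℝ} {g : W → ℝ} {k : V → W → ℝ} {M Q p : ℝ}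
    (hk : ∀ a ∈ A, ∀ b ∈ B, 0 ≤ k a b) (hM : 0 < M) (hQ : 1 ≤ Q)
    (hf : ∀ a ∈ A, |f a| ≤ ∑ b ∈ B, k a b * |g b|)
    (hrow : ∀ a ∈ A, ∑ b ∈ B, k a b ≤ M)
    (hcol : ∀ b ∈ B, ∑ a ∈ A, k a b ≤ M * A.card / B.card)
    (hsup : ∀ a ∈ A, ∀ b ∈ B, k a b ≤ M * Q / B.card) (hp : 1 ≤ p) :
    (∀ a ∈ A, |f a| ≤ M * Q ^ (1 / p) * avNorm p B g) ∧
    ∀ q : ℝ, p ≤ q → avNorm q A f ≤ M * Q ^ (1 / p - 1 / q) * avNorm p B g := by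
  have hp0 : 0 < p := by linarith
  have hQ0 : 0 < Q := by linarith
  have hAc : (0 : ℝ) < A.card := by exact_mod_cast hA.card_pos
  have hBc : (0 : ℝ) < B.card := by exact_mod_cast hB.card_pos
  have hi : 1 / p ≤ 1 := by rw [div_le_one hp0]; exact hp
  set G : ℝ := (∑ b ∈ B, |g b| ^ p) / B.card with hG
  have hG0 : 0 ≤ G := div_nonneg (Finset.sum_nonneg fun _ _ => by positivity) hBc.le
  have hN : avNorm p B g = G ^ (1 / p) := rfl
  set h : V → ℝ := fun a => ∑ b ∈ B, k a b * |g b| ^ p with hh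
  have hh0 : ∀ a ∈ A, 0 ≤ h a := fun a ha =>
    Finset.sum_nonneg fun b hb => mul_nonneg (hk a ha b hb) (by positivity)
  have hfh : ∀ a ∈ A, |f a| ≤ M ^ (1 - 1 / p) * h a ^ (1 / p) := by
    intro a ha
    have h1 := Real.inner_le_weight_mul_Lp_of_nonneg (ι := {b // b ∈ B}) Finset.univ hp
      (fun b => k a b) (fun b => |g b|) (fun b => hk a ha b b.2) (fun b => abs_nonneg _)
    rw [Finset.sum_coe_sort B (fun b => k a b * |g b|), Finset.sum_coe_sort B (fun b => k a b),
      Finset.sum_coe_sort B (fun b => k a b * |g b| ^ p)] at h1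
    rw [one_div]
    refine (hf a ha).trans (h1.trans ?_)
    refine mul_le_mul_of_nonneg_right ?_ (Real.rpow_nonneg (hh0 a ha) _)
    refine Real.rpow_le_rpow (Finset.sum_nonneg fun b hb => hk a ha b hb) (hrow a ha) ?_
    rw [← one_div]; linarith
  have hhs : ∀ a ∈ A, h a ≤ M * Q * G := by
    intro a ha
    calc h a ≤ ∑ b ∈ B, M * Q / B.card * |g b| ^ p :=
          Finset.sum_le_sum fun b hb =>
            mul_le_mul_of_nonneg_right (hsup a ha b hb) (by positivity)
      _ = M * Q * G := by rw [← Finset.mul_sum, hG]; ring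
  have hhsum : ∑ a ∈ A, h a ≤ M * A.card * G := by
    calc ∑ a ∈ A, h a = ∑ b ∈ B, (∑ a ∈ A, k a b) * |g b| ^ p := by
          simp only [hh]; rw [Finset.sum_comm]; simp only [Finset.sum_mul]
      _ ≤ ∑ b ∈ B, (M * A.card / B.card) * |g b| ^ p :=
          Finset.sum_le_sum fun b hb => mul_le_mul_of_nonneg_right (hcol b hb) (by positivity)
      _ = M * A.card * G := by rw [← Finset.mul_sum, hG]; ring
  have hMM : M ^ (1 - 1 / p) * M ^ (1 / p) = M := by
    rw [← Real.rpow_add hM]; simp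
  constructor
  · intro a ha
    calc |f a| ≤ M ^ (1 - 1 / p) * h a ^ (1 / p) := hfh a ha
      _ ≤ M ^ (1 - 1 / p) * (M * Q * G) ^ (1 / p) := by
          gcongr
          · exact hh0 a ha
          · exact hhs a ha
      _ = (M ^ (1 - 1 / p) * M ^ (1 / p)) * Q ^ (1 / p) * G ^ (1 / p) := by
          rw [Real.mul_rpow (by positivity) hG0, Real.mul_rpow hM.le hQ0.le]; ring
      _ = _ := by rw [hMM, hN]
  · intro q hpq
    have hq0 : 0 < q := by linarith
    have hqp : 0 ≤ q / p - 1 := by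
      rw [sub_nonneg, le_div_iff₀ hp0]; linarith
    have split : ∀ x : ℝ, 0 ≤ x → x ^ (q / p) = x ^ (q / p - 1) * x := by
      intro x hx
      have := Real.rpow_add_of_nonneg hx hqp zero_le_one
      simpa using this
    have key : (∑ a ∈ A, |f a| ^ q) / A.card ≤ (M * Q ^ (1 / p - 1 / q) * G ^ (1 / p)) ^ q := by
      rw [div_le_iff₀ hAc]
      calc ∑ a ∈ A, |f a| ^ q
          ≤ ∑ a ∈ A, M ^ (q - q / p) * ((M * Q * G) ^ (q / p - 1) * h a) := by
            refine Finset.sum_le_sum fun a ha => ?_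
            calc |f a| ^ q ≤ (M ^ (1 - 1 / p) * h a ^ (1 / p)) ^ q :=
                  Real.rpow_le_rpow (abs_nonneg _) (hfh a ha) hq0.le
              _ = M ^ (q - q / p) * h a ^ (q / p) := by
                  rw [Real.mul_rpow (by positivity) (Real.rpow_nonneg (hh0 a ha) _),
                    ← Real.rpow_mul hM.le, ← Real.rpow_mul (hh0 a ha)]
                  congr 2 <;> ring
              _ ≤ _ := by
                  rw [split _ (hh0 a ha)]
                  have := hh0 a ha
                  have := hhs a ha
                  gcongr
        _ = M ^ (q - q / p) * (M * Q * G) ^ (q / p - 1) * ∑ a ∈ A, h a := by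
            rw [Finset.mul_sum]; exact Finset.sum_congr rfl fun _ _ => by ring
        _ ≤ M ^ (q - q / p) * (M * Q * G) ^ (q / p - 1) * (M * A.card * G) := by gcongr
        _ = (M ^ (q - q / p) * (M ^ (q / p - 1) * M)) * Q ^ (q / p - 1) *
              (G ^ (q / p - 1) * G) * A.card := by
            rw [Real.mul_rpow (by positivity) hG0, Real.mul_rpow hM.le hQ0.le]; ring
        _ = _ := by
            rw [← split _ hM.le, ← split _ hG0, ← Real.rpow_add hM,
              Real.mul_rpow (by positivity) (by positivity),
              Real.mul_rpow (by positivity) (by positivity), ← Real.rpow_mul hQ0.le,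
              ← Real.rpow_mul hG0, sub_add_cancel,
              show q / p - 1 = (1 / p - 1 / q) * q by field_simp,
              show q / p = 1 / p * q by ring]
    calc avNorm q A f ≤ ((M * Q ^ (1 / p - 1 / q) * G ^ (1 / p)) ^ q) ^ (1 / q) := by
          unfold avNorm
          exact Real.rpow_le_rpow
            (div_nonneg (Finset.sum_nonneg fun _ _ => by positivity) hAc.le) key (by positivity)
      _ = _ := by
          rw [← Real.rpow_mul (by positivity), mul_one_div_cancel hq0.ne', Real.rpow_one, hN]

theorem avNormE_le_of_kernel {V W : Type*} {A : Finset V} {B : Finset W}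
    (hA : A.Nonempty) (hB : B.Nonempty) {f : V → ℝ} {g : W → ℝ} {k : V → W → ℝ} {M Q : ℝ}
    (hk : ∀ a ∈ A, ∀ b ∈ B, 0 ≤ k a b) (hM : 0 < M) (hQ : 1 ≤ Q)
    (hf : ∀ a ∈ A, |f a| ≤ ∑ b ∈ B, k a b * |g b|)
    (hrow : ∀ a ∈ A, ∑ b ∈ B, k a b ≤ M)
    (hcol : ∀ b ∈ B, ∑ a ∈ A, k a b ≤ M * A.card / B.card)
    (hsup : ∀ a ∈ A, ∀ b ∈ B, k a b ≤ M * Q / B.card)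
    {s r : ℝ≥0∞} (hs : 1 ≤ s) (hsr : s ≤ r) :
    avNormE r A f ≤ M * Q ^ ((1 / s).toReal - (1 / r).toReal) * avNormE s B g := by
  have hQ0 : 0 < Q := by linarith
  by_cases hs' : s = ∞
  · have hr' : r = ∞ := top_le_iff.mp (hs' ▸ hsr)
    subst hs' hr'
    simp only [avNormE, if_true, sub_self, Real.rpow_zero, mul_one]
    refine supNorm_le (mul_nonneg hM.le (supNorm_nonneg _ _)) fun a ha => (hf a ha).trans ?_
    calc ∑ b ∈ B, k a b * |g b| ≤ ∑ b ∈ B, k a b * supNorm B g :=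
          Finset.sum_le_sum fun b hb =>
            mul_le_mul_of_nonneg_left (abs_le_supNorm hb) (hk a ha b hb)
      _ = (∑ b ∈ B, k a b) * supNorm B g := by rw [Finset.sum_mul]
      _ ≤ _ := mul_le_mul_of_nonneg_right (hrow a ha) (supNorm_nonneg _ _)
  · have hp : 1 ≤ s.toReal := by
      rw [← ENNReal.toReal_one]; exact ENNReal.toReal_mono hs' hs
    have hmain := avNorm_le_of_kernel hA hB hk hM hQ hf hrow hcol hsup hp
    by_cases hr' : r = ∞
    · subst hr'
      simp only [avNormE, if_true, hs', if_false]
      refine supNorm_le ?_ ?_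
      · unfold avNorm; positivity
      · simpa using hmain.1
    · have := hmain.2 r.toReal (ENNReal.toReal_mono hr' hsr)
      simpa [avNormE, hs', hr'] using this

/-- The averaged form of the Schur test: the kernel is an average over a finite index set of
relations with bounded degrees. -/
theorem avNormE_le_of_relation {ι V W : Type*} {I : Finset ι} {A : Finset V} {B : Finset W}
    (hA : A.Nonempty) (hB : B.Nonempty) {f : V → ℝ} {g : W → ℝ} {rel : ι → V → W → Prop}
    [∀ i a b, Decidable (rel i a b)]
    {c M N N' Q : ℝ} (hc : 0 ≤ c) (hM : 0 < M) (hQ : 1 ≤ Q)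
    (hf : ∀ a ∈ A, |f a| ≤ c * ∑ i ∈ I, ∑ b ∈ B with rel i a b, |g b|)
    (hrow : ∀ i ∈ I, ∀ a ∈ A, ((B.filter fun b => rel i a b).card : ℝ) ≤ N)
    (hcol : ∀ i ∈ I, ∀ b ∈ B, ((A.filter fun a => rel i a b).card : ℝ) ≤ N)
    (hmul : ∀ a ∈ A, ∀ b ∈ B, ((I.filter fun i => rel i a b).card : ℝ) ≤ N')
    (h₁ : c * (I.card * N) ≤ M) (h₂ : c * (I.card * N) ≤ M * A.card / B.card)
    (h₃ : c * N' ≤ M * Q / B.card)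
    {s r : ℝ≥0∞} (hs : 1 ≤ s) (hsr : s ≤ r) :
    avNormE r A f ≤ M * Q ^ ((1 / s).toReal - (1 / r).toReal) * avNormE s B g := by
  refine avNormE_le_of_kernel hA hB (k := fun a b => c * ∑ i ∈ I, if rel i a b then 1 else 0)
    (fun a _ b _ => mul_nonneg hc (Finset.sum_nonneg fun i _ => by positivity)) hM hQ ?_ ?_ ?_ ?_
    hs hsr
  · intro a ha
    refine (hf a ha).trans_eq ?_
    simp only [Finset.sum_filter, mul_assoc, ← Finset.mul_sum, Finset.sum_mul, ite_mul, one_mul,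
      zero_mul]
    rw [Finset.sum_comm]
  · intro a ha
    refine le_trans ?_ h₁
    rw [← Finset.mul_sum, Finset.sum_comm]
    refine mul_le_mul_of_nonneg_left ?_ hc
    rw [← nsmul_eq_mul]
    refine Finset.sum_le_card_nsmul _ _ _ fun i hi => ?_
    simpa using hrow i hi a ha
  · intro b hb
    refine le_trans ?_ h₂
    rw [← Finset.mul_sum, Finset.sum_comm]
    refine mul_le_mul_of_nonneg_left ?_ hc
    rw [← nsmul_eq_mul]
    refine Finset.sum_le_card_nsmul _ _ _ fun i hi => ?_
    simpa using hcol i hi b hb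
  · intro a ha b hb
    refine le_trans (mul_le_mul_of_nonneg_left ?_ hc) h₃
    simpa using hmul a ha b hb

/-- The closed `ℓ^∞` ball of radius `K` around `y` in `ℤ^d`. -/
def cubeAt {d : ℕ} (K : ℕ) (y : Zd d) : Finset (Zd d) :=
  Fintype.piFinset fun i => Finset.Icc (y i - K) (y i + K)

theorem mem_cubeAt {d K : ℕ} {x y : Zd d} : x ∈ cubeAt K y ↔ ∀ i, |x i - y i| ≤ K := by
  simp only [cubeAt, Fintype.mem_piFinset, Finset.mem_Icc, abs_le]
  exact forall_congr' fun i => ⟨fun h => ⟨by linarith, by linarith⟩,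
    fun h => ⟨by linarith, by linarith⟩⟩

theorem mem_cubeAt_comm {d K : ℕ} {x y : Zd d} : x ∈ cubeAt K y ↔ y ∈ cubeAt K x := by
  simp only [mem_cubeAt, abs_sub_comm]

theorem self_mem_cubeAt {d K : ℕ} (x : Zd d) : x ∈ cubeAt K x := by
  simp [mem_cubeAt]

theorem card_cubeAt {d K : ℕ} (y : Zd d) : (cubeAt K y).card = (2 * K + 1) ^ d := by
  have (i : Fin d) : y i + K + 1 - (y i - K) = ((2 * K + 1 : ℕ) : ℤ) := by push_cast; ring
  simp only [cubeAt, Fintype.card_piFinset, Int.card_Icc, this, Int.toNat_natCast,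
    Finset.prod_const, Finset.card_univ, Fintype.card_fin]

/-- A set of diameter at most `K` has at most `(2K+1)^d` elements. -/
theorem card_le_of_pairwise_mem_cubeAt {d K : ℕ} {s : Finset (Zd d)}
    (h : ∀ x ∈ s, ∀ y ∈ s, y ∈ cubeAt K x) : s.card ≤ (2 * K + 1) ^ d := by
  rcases s.eq_empty_or_nonempty with rfl | ⟨x, hx⟩
  · simp
  · rw [← card_cubeAt x]
    exact Finset.card_le_card fun y hy => h x hx y hy

/-- The `ℓ^∞` norm on `ℤ^d`. -/
def supAbs {d : ℕ} (x : Zd d) : ℕ := Finset.univ.sup fun i => (x i).natAbs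

theorem abs_le_supAbs {d : ℕ} (x : Zd d) (i : Fin d) : |x i| ≤ supAbs x := by
  rw [Int.abs_eq_natAbs]
  exact_mod_cast Finset.le_sup (f := fun i => (x i).natAbs) (Finset.mem_univ i)

theorem supAbs_le {d n : ℕ} {x : Zd d} (h : ∀ i, |x i| ≤ n) : supAbs x ≤ n :=
  Finset.sup_le fun i _ => by have := h i; rw [Int.abs_eq_natAbs] at this; omega

theorem exists_abs_eq_supAbs {d : ℕ} {x : Zd d} (h : 0 < supAbs x) :
    ∃ i, |x i| = supAbs x := by
  have hne : (Finset.univ : Finset (Fin d)).Nonempty := by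
    by_contra hne
    rw [Finset.not_nonempty_iff_eq_empty] at hne
    simp [supAbs, hne] at h
  obtain ⟨i, -, hi⟩ := Finset.exists_mem_eq_sup _ hne fun i => (x i).natAbs
  exact ⟨i, by rw [Int.abs_eq_natAbs, supAbs, hi]⟩

theorem supAbs_le_add {d K : ℕ} {x y : Zd d} (h : y ∈ cubeAt K x) :
    supAbs y ≤ supAbs x + K := by
  refine supAbs_le fun i => ?_
  have h1 := mem_cubeAt.1 h i
  have h2 := abs_le_supAbs x i
  rw [abs_le] at *
  push_cast
  constructor <;> linarith

theorem mem_bdry {d R : ℕ} {x : Zd d} :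
    x ∈ bdry d R ↔ (∀ i, |x i| ≤ R) ∧ ∃ i, |x i| = R := by
  simp only [bdry, boxC, boxD, Finset.mem_sdiff, Fintype.mem_piFinset, Finset.mem_Icc,
    Finset.mem_Ioo, ← abs_le, ← abs_lt, not_forall, not_lt]
  exact and_congr_right fun h => exists_congr fun i =>
    ⟨fun hi => le_antisymm (h i) hi, fun hi => hi.ge⟩

theorem supAbs_of_mem_bdry {d R : ℕ} {x : Zd d} (h : x ∈ bdry d R) : supAbs x = R := by
  obtain ⟨h1, i, hi⟩ := mem_bdry.1 h
  refine le_antisymm (supAbs_le h1) ?_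
  have := abs_le_supAbs x i
  omega

/-- Radial projection of `ℤ^d` onto `∂D_R`, rounded down. -/
def radProj {d : ℕ} (R : ℕ) (z : Zd d) : Zd d := fun i => (R * z i) / (supAbs z : ℤ)

theorem mul_radProj_le {d R : ℕ} {z : Zd d} (h : 0 < supAbs z) (i : Fin d) :
    (supAbs z : ℤ) * radProj R z i ≤ R * z i :=
  Int.mul_ediv_self_le (by omega)

theorem lt_mul_radProj_add {d R : ℕ} {z : Zd d} (h : 0 < supAbs z) (i : Fin d) :
    R * z i < (supAbs z : ℤ) * radProj R z i + supAbs z :=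
  Int.lt_mul_ediv_self_add (by exact_mod_cast h)

theorem radProj_mem_bdry {d R : ℕ} {z : Zd d} (h : 0 < supAbs z) : radProj R z ∈ bdry d R := by
  have hm : (0 : ℤ) < supAbs z := by exact_mod_cast h
  rw [mem_bdry]
  constructor
  · intro i
    obtain ⟨h1, h2⟩ := abs_le.1 (abs_le_supAbs z i)
    rw [abs_le]
    constructor
    · refine (Int.le_ediv_iff_mul_le hm).2 ?_
      nlinarith
    · refine Int.ediv_le_of_le_mul hm ?_
      nlinarith
  · obtain ⟨i, hi⟩ := exists_abs_eq_supAbs h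
    refine ⟨i, ?_⟩
    rcases (abs_eq hm.le).1 hi with h1 | h1
    · simp [radProj, h1, Int.mul_ediv_cancel _ hm.ne']
    · simp [radProj, h1, ← neg_mul, Int.mul_ediv_cancel _ hm.ne']

theorem radProj_of_mem_bdry {d R : ℕ} {x : Zd d} (h : x ∈ bdry d R) : radProj R x = x := by
  funext i
  rw [radProj, supAbs_of_mem_bdry h]
  rcases Nat.eq_zero_or_pos R with rfl | hR
  · have := (mem_bdry.1 h).1 i
    simp at this
    simp [this]
  · exact Int.mul_ediv_cancel_left _ (by omega)

theorem sub_le_three_of_near {R m m' z z' p p' : ℤ} (hR : 0 ≤ R) (hm : 0 < m) (hm' : 0 < m')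
    (hRm : 3 * R ≤ 4 * m) (hz : |z' - z| ≤ 1) (hmm : |m' - m| ≤ 1) (hz' : |z'| ≤ m')
    (h1 : m' * p' ≤ R * z') (h2 : R * z < m * p + m) : p' - p ≤ 3 := by
  by_contra! hcon
  have e1 : m * z' - m' * z ≤ 2 * m' := by
    have a1 : z' * (m - m') ≤ m' := by
      refine (le_abs_self _).trans ?_
      rw [abs_mul, abs_sub_comm]
      nlinarith [abs_nonneg z', abs_nonneg (m' - m)]
    have a2 : m' * (z' - z) ≤ m' := by nlinarith [(abs_le.1 hz).2]
    nlinarith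
  have e2 : m * (m' * p') ≤ m * (R * z') := mul_le_mul_of_nonneg_left h1 hm.le
  have e3 : m' * (R * z) < m' * (m * p + m) := mul_lt_mul_of_pos_left h2 hm'
  have e4 : R * (m * z' - m' * z) ≤ R * (2 * m') := mul_le_mul_of_nonneg_left e1 hR
  have e5 : m' * (m * (p' - p)) < m' * (2 * R + m) := by nlinarith
  have e6 : m * (p' - p) < 2 * R + m := lt_of_mul_lt_mul_left e5 hm'.le
  nlinarith

/-- The radial projection is Lipschitz up to rounding near `∂D_R`. -/
theorem radProj_mem_cubeAt {d R : ℕ} {z z' : Zd d} (hR : 0 < R) (hm : 3 * R ≤ 4 * supAbs z)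
    (hm' : 3 * R ≤ 4 * supAbs z') (h : z' ∈ cubeAt 1 z) :
    radProj R z' ∈ cubeAt 3 (radProj R z) := by
  have h0 : 0 < supAbs z := by omega
  have h0' : 0 < supAbs z' := by omega
  have hs : |(supAbs z' : ℤ) - supAbs z| ≤ 1 := by
    have := supAbs_le_add h
    have := supAbs_le_add (mem_cubeAt_comm.1 h)
    rw [abs_le]; omega
  refine mem_cubeAt.2 fun i => abs_le.2 ⟨?_, ?_⟩
  · have := sub_le_three_of_near (R := R) (by positivity) (by exact_mod_cast h0')
      (by exact_mod_cast h0) (by exact_mod_cast hm') (mem_cubeAt.1 (mem_cubeAt_comm.1 h) i)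
      (by rwa [abs_sub_comm]) (abs_le_supAbs z i) (mul_radProj_le h0 i) (lt_mul_radProj_add h0' i)
    push_cast; linarith
  · have := sub_le_three_of_near (R := R) (by positivity) (by exact_mod_cast h0)
      (by exact_mod_cast h0') (by exact_mod_cast hm) (mem_cubeAt.1 h i)
      hs (abs_le_supAbs z' i) (mul_radProj_le h0' i) (lt_mul_radProj_add h0 i)
    push_cast; linarith

theorem supAbs_add_bounds {d R L : ℕ} {x v : Zd d} (hx : x ∈ bdry d R) (hv : v ∈ cubeAt L 0) :
    supAbs (x + v) ≤ R + L ∧ R ≤ supAbs (x + v) + L := by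
  have h : x + v ∈ cubeAt L x := by
    have := mem_cubeAt.1 hv
    exact mem_cubeAt.2 fun i => by simpa using this i
  have h1 := supAbs_le_add h
  have h2 := supAbs_le_add (mem_cubeAt_comm.1 h)
  rw [supAbs_of_mem_bdry hx] at h1 h2
  exact ⟨h1, h2⟩

/-- Two boundary points whose translates have the same radial projection lie at almost the
same radius after translation. -/
theorem supAbs_add_le_of_radProj_eq {d R L : ℕ} {x x' v : Zd d} (hR : 0 < R) (hL : 4 * L ≤ R)
    (hv : v ∈ cubeAt L 0) (hx : x ∈ bdry d R) (hx' : x' ∈ bdry d R)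
    (h : radProj R (x + v) = radProj R (x' + v)) : supAbs (x' + v) ≤ supAbs (x + v) + 3 := by
  obtain ⟨b1, b2⟩ := supAbs_add_bounds hx hv
  obtain ⟨b1', b2'⟩ := supAbs_add_bounds hx' hv
  obtain ⟨k, hk⟩ := (mem_bdry.1 hx).2
  have hk' := abs_le.1 ((mem_bdry.1 hx').1 k)
  have hvk : |v k| ≤ L := by simpa using mem_cubeAt.1 hv k
  rw [abs_le] at hvk
  have p1 := mul_radProj_le (R := R) (z := x + v) (by omega) k
  have p2 := lt_mul_radProj_add (R := R) (z := x + v) (by omega) k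
  have p1' := mul_radProj_le (R := R) (z := x' + v) (by omega) k
  have p2' := lt_mul_radProj_add (R := R) (z := x' + v) (by omega) k
  rw [← h] at p1' p2'
  generalize radProj R (x + v) k = y at *
  generalize supAbs (x + v) = m at *
  generalize supAbs (x' + v) = m' at *
  simp only [Pi.add_apply] at p1 p2 p1' p2'
  by_contra! hcon
  zify at *
  rcases (abs_eq (by positivity)).1 hk with e | e
  · have c1 : (R : ℤ) * (x' k + v k) ≤ R * (x k + v k) := by nlinarith
    have c2 : ((m' : ℤ) - m) * y < m := by linarith
    have q1 : (R : ℤ) * (3 * R) ≤ 4 * (R * (x k + v k)) := by nlinarith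
    have q2 : 0 < y + 1 := by
      refine pos_of_mul_pos_right (a := (m : ℤ)) ?_ (by positivity)
      nlinarith
    have q3 : 4 * m * (y + 1) ≤ 5 * R * (y + 1) :=
      mul_le_mul_of_nonneg_right (by linarith) q2.le
    have c3 : (R : ℤ) * (3 * R) < R * (5 * (y + 1)) := by linarith
    have c4 := lt_of_mul_lt_mul_left c3 (by positivity)
    nlinarith
  · have c1 : (R : ℤ) * (x k + v k) ≤ R * (x' k + v k) := by nlinarith
    have c2 : ((m' : ℤ) - m) * (-y) < m' := by linarith
    have q1 : 4 * (R * (x k + v k)) ≤ -((R : ℤ) * (3 * R)) := by nlinarith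
    have q2 : 0 < -y := by
      refine pos_of_mul_pos_right (a := (m : ℤ)) ?_ (by positivity)
      nlinarith
    have q3 : 4 * m * (-y) ≤ 5 * R * (-y) :=
      mul_le_mul_of_nonneg_right (by linarith) q2.le
    have c3 : (R : ℤ) * (3 * R) ≤ R * (5 * (-y)) := by linarith
    have c4 := le_of_mul_le_mul_left c3 (by positivity)
    nlinarith

theorem mem_cubeAt_of_radProj_eq {d R L : ℕ} {x x' v : Zd d} (hR : 0 < R) (hL : 4 * L ≤ R)
    (hv : v ∈ cubeAt L 0) (hx : x ∈ bdry d R) (hx' : x' ∈ bdry d R)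
    (h : radProj R (x + v) = radProj R (x' + v)) : x' ∈ cubeAt 4 x := by
  obtain ⟨b1, b2⟩ := supAbs_add_bounds hx hv
  obtain ⟨b1', b2'⟩ := supAbs_add_bounds hx' hv
  have d1 := supAbs_add_le_of_radProj_eq hR hL hv hx hx' h
  have d2 := supAbs_add_le_of_radProj_eq hR hL hv hx' hx h.symm
  refine mem_cubeAt.2 fun k => ?_
  have hy := (mem_bdry.1 (radProj_mem_bdry (R := R) (z := x + v) (by omega))).1 k
  have p1 := mul_radProj_le (R := R) (z := x + v) (by omega) k
  have p2 := lt_mul_radProj_add (R := R) (z := x + v) (by omega) k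
  have p1' := mul_radProj_le (R := R) (z := x' + v) (by omega) k
  have p2' := lt_mul_radProj_add (R := R) (z := x' + v) (by omega) k
  rw [← h] at p1' p2'
  generalize radProj R (x + v) k = y at *
  generalize supAbs (x + v) = m at *
  generalize supAbs (x' + v) = m' at *
  simp only [Pi.add_apply] at p1 p2 p1' p2'
  zify at *
  have e : |((m' : ℤ) - m) * y| ≤ 3 * R := by
    rw [abs_mul]
    refine mul_le_mul (abs_le.2 ⟨by linarith, by linarith⟩) hy (abs_nonneg _) (by norm_num)
  rw [abs_le] at e ⊢
  push_cast
  constructor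
  · by_contra! hcon
    nlinarith
  · by_contra! hcon
    nlinarith

theorem card_radProj_fiber_le {d R L : ℕ} {v y : Zd d} (hR : 0 < R) (hL : 4 * L ≤ R)
    (hv : v ∈ cubeAt L 0) :
    ((bdry d R).filter fun x => radProj R (x + v) = y).card ≤ 9 ^ d := by
  refine card_le_of_pairwise_mem_cubeAt (K := 4) fun x hx x' hx' => ?_
  rw [Finset.mem_filter] at hx hx'
  exact mem_cubeAt_of_radProj_eq hR hL hv hx.1 hx'.1 (hx.2.trans hx'.2.symm)

theorem card_mem_cubeAt_radProj_le {d R L : ℕ} {v : Zd d} (y : Zd d) (hR : 0 < R)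
    (hL : 4 * L ≤ R) (hv : v ∈ cubeAt L 0) :
    ((bdry d R).filter fun x => y ∈ cubeAt 3 (radProj R (x + v))).card ≤ 63 ^ d := by
  have h := Finset.card_le_mul_card_image_of_maps_to
    (s := (bdry d R).filter fun x => y ∈ cubeAt 3 (radProj R (x + v)))
    (f := fun x => radProj R (x + v)) (t := cubeAt 3 y)
    (fun x hx => mem_cubeAt_comm.1 (Finset.mem_filter.1 hx).2) (9 ^ d) fun b _ =>
      (Finset.card_le_card (Finset.filter_subset_filter _ (Finset.filter_subset _ _))).trans
        (card_radProj_fiber_le hR hL hv)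
  refine h.trans_eq ?_
  rw [card_cubeAt, ← mul_pow]
  norm_num

/-- A given point is hit by the projected translates of `x` for few translation vectors. -/
theorem card_shift_radProj_eq_le {d R L : ℕ} {x : Zd d} (y : Zd d) (hR : 0 < R)
    (hL : 4 * L ≤ R) (hx : x ∈ bdry d R) :
    ((cubeAt L 0).filter fun v => radProj R (x + v) = y).card ≤ 3 ^ d * (2 * L + 1) := by
  have h := Finset.card_le_mul_card_image_of_maps_to
    (s := (cubeAt L 0).filter fun v => radProj R (x + v) = y)
    (f := fun v => (supAbs (x + v) : ℤ)) (t := Finset.Icc ((R : ℤ) - L) (R + L))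
    (fun v hv => by
      obtain ⟨b1, b2⟩ := supAbs_add_bounds hx (Finset.mem_filter.1 hv).1
      rw [Finset.mem_Icc]; omega) (3 ^ d) fun b _ => by
      refine card_le_of_pairwise_mem_cubeAt (K := 1) fun v hv v' hv' => ?_
      simp only [Finset.mem_filter] at hv hv'
      obtain ⟨⟨hv, hy⟩, hb⟩ := hv
      obtain ⟨⟨hv', hy'⟩, hb'⟩ := hv'
      obtain ⟨b1, b2⟩ := supAbs_add_bounds hx hv
      obtain ⟨b1', b2'⟩ := supAbs_add_bounds hx hv'
      refine mem_cubeAt.2 fun k => ?_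
      have p1 := mul_radProj_le (R := R) (z := x + v) (by omega) k
      have p2 := lt_mul_radProj_add (R := R) (z := x + v) (by omega) k
      have p1' := mul_radProj_le (R := R) (z := x + v') (by omega) k
      have p2' := lt_mul_radProj_add (R := R) (z := x + v') (by omega) k
      rw [hy, hb] at p1 p2
      rw [hy', hb'] at p1' p2'
      simp only [Pi.add_apply] at p1 p2 p1' p2'
      have hbR : 4 * b ≤ 5 * R := by omega
      push_cast
      rw [abs_le]
      constructor
      · by_contra! hcon
        nlinarith
      · by_contra! hcon
        nlinarith
  refine h.trans_eq ?_
  rw [Int.card_Icc]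
  congr 1
  omega

theorem card_shift_mem_cubeAt_le {d R L : ℕ} {x : Zd d} (y : Zd d) (hR : 0 < R)
    (hL : 4 * L ≤ R) (hx : x ∈ bdry d R) :
    ((cubeAt L 0).filter fun v => y ∈ cubeAt 3 (radProj R (x + v))).card
      ≤ 21 ^ d * (2 * L + 1) := by
  have h := Finset.card_le_mul_card_image_of_maps_to
    (s := (cubeAt L 0).filter fun v => y ∈ cubeAt 3 (radProj R (x + v)))
    (f := fun v => radProj R (x + v)) (t := cubeAt 3 y)
    (fun x hx => mem_cubeAt_comm.1 (Finset.mem_filter.1 hx).2) (3 ^ d * (2 * L + 1)) fun b _ =>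
      (Finset.card_le_card (Finset.filter_subset_filter _ (Finset.filter_subset _ _))).trans
        (card_shift_radProj_eq_le b hR hL hx)
  refine h.trans_eq ?_
  rw [card_cubeAt, mul_right_comm, ← mul_pow]
  norm_num

theorem Adj.mem_cubeAt {d : ℕ} {x y : Zd d} (h : Adj x y) : y ∈ cubeAt 1 x := by
  refine _root_.mem_cubeAt.2 fun k => ?_
  obtain ⟨i, rfl | rfl⟩ := h <;> simp only [Pi.add_apply, unitVec] <;> split_ifs <;> simp

theorem mem_Etan {d R : ℕ} {e : Zd d × Zd d} :
    e ∈ Etan d R ↔ e.1 ∈ bdry d R ∧ e.2 ∈ bdry d R ∧ Adj e.1 e.2 := by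
  simp [Etan, and_assoc]

theorem card_filter_Etan_le {d R n : ℕ} (P : Zd d → Prop) [DecidablePred P]
    (h : ((bdry d R).filter P).card ≤ n) :
    ((Etan d R).filter fun e => P e.1).card ≤ 3 ^ d * n := by
  refine (Finset.card_le_mul_card_image_of_maps_to (f := Prod.fst) (t := (bdry d R).filter P)
    (fun e he => ?_) (3 ^ d) fun x _ => ?_).trans (Nat.mul_le_mul_left _ h)
  · rw [Finset.mem_filter] at he ⊢
    exact ⟨(mem_Etan.1 he.1).1, he.2⟩
  · rw [show 3 ^ d = (cubeAt 1 x).card by rw [card_cubeAt]]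
    refine Finset.card_le_card_of_injOn Prod.snd (fun e he => ?_) fun e he e' he' hee => ?_
    · simp only [Finset.mem_filter, Finset.mem_coe] at he ⊢
      obtain ⟨⟨he, -⟩, rfl⟩ := he
      exact (mem_Etan.1 he).2.2.mem_cubeAt
    · simp only [Finset.mem_filter, Finset.mem_coe] at he he'
      exact Prod.ext (he.2.trans he'.2.symm) hee

theorem card_Etan_le {d R : ℕ} : (Etan d R).card ≤ 3 ^ d * (bdry d R).card := by
  simpa using card_filter_Etan_le (d := d) (R := R) (fun _ => True) (by simp)

theorem exists_mem_Etan {d R : ℕ} (hd : 2 ≤ d) (hR : 0 < R) {x : Zd d} (hx : x ∈ bdry d R) :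
    ∃ y, (x, y) ∈ Etan d R := by
  obtain ⟨h1, i, hi⟩ := mem_bdry.1 hx
  have : Nontrivial (Fin d) := Fin.nontrivial_iff_two_le.2 hd
  obtain ⟨j, hj⟩ := exists_ne i
  by_cases hxj : x j < R
  · refine ⟨x + unitVec j, mem_Etan.2 ⟨hx, mem_bdry.2 ⟨fun k => ?_, i, ?_⟩, j, Or.inl rfl⟩⟩
    · by_cases hk : k = j
      · subst hk
        have := abs_le.1 (h1 k)
        simp only [Pi.add_apply, unitVec, if_true]
        rw [abs_le]; omega
      · simpa [unitVec, hk] using h1 k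
    · simpa [unitVec, hj.symm] using hi
  · refine ⟨x - unitVec j, mem_Etan.2 ⟨hx, mem_bdry.2 ⟨fun k => ?_, i, ?_⟩, j,
      Or.inr (by simp)⟩⟩
    · by_cases hk : k = j
      · subst hk
        have := abs_le.1 (h1 k)
        simp only [Pi.sub_apply, unitVec, if_true]
        rw [abs_le]; omega
      · simpa [unitVec, hk] using h1 k
    · simpa [unitVec, hj.symm] using hi

theorem card_bdry_le_card_Etan {d R : ℕ} (hd : 2 ≤ d) (hR : 0 < R) :
    (bdry d R).card ≤ (Etan d R).card := by
  refine Finset.card_le_card_of_surjOn Prod.fst fun x hx => ?_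
  obtain ⟨y, hy⟩ := exists_mem_Etan hd hR hx
  exact ⟨(x, y), hy, rfl⟩

theorem bdry_nonempty {d R : ℕ} (hd : 0 < d) : (bdry d R).Nonempty :=
  ⟨fun _ => R, mem_bdry.2 ⟨fun _ => by simp, ⟨0, hd⟩, by simp⟩⟩

theorem card_bdry_le {d R : ℕ} : (bdry d R).card ≤ 2 * d * (2 * R + 1) ^ (d - 1) := by
  have hsub : bdry d R ⊆ (Finset.univ : Finset (Fin d)).biUnion fun i =>
      Fintype.piFinset fun j => if j = i then {-(R : ℤ), (R : ℤ)} else Finset.Icc (-(R : ℤ)) R := by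
    intro x hx
    obtain ⟨h1, i, hi⟩ := mem_bdry.1 hx
    refine Finset.mem_biUnion.2 ⟨i, Finset.mem_univ _, Fintype.mem_piFinset.2 fun j => ?_⟩
    split_ifs with hj
    · subst hj
      have := (abs_eq (by positivity)).1 hi
      simpa [or_comm] using this
    · exact Finset.mem_Icc.2 (abs_le.1 (h1 j))
  refine (Finset.card_le_card hsub).trans ?_
  refine (Finset.card_biUnion_le_card_mul _ _ (2 * (2 * R + 1) ^ (d - 1)) fun i _ => ?_).trans_eq
    ?_
  · rw [Fintype.card_piFinset, Fintype.prod_eq_mul_prod_compl i]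
    refine Nat.mul_le_mul ?_ (le_of_eq ?_)
    · simpa using Finset.card_le_two
    · rw [Finset.prod_congr rfl (g := fun _ => 2 * R + 1)]
      · simp [Finset.card_compl]
      · intro j hj
        have : j ≠ i := by simpa using hj
        simp only [this, if_false, Int.card_Icc]
        omega
  · simp; ring

/-- The sum of the tangential gradient over the edges starting near `x`. -/
def localGrad {d : ℕ} (R : ℕ) (u : Zd d → ℝ) (x : Zd d) : ℝ :=
  ∑ e ∈ Etan d R with e.1 ∈ cubeAt 3 x, |u e.2 - u e.1|

theorem localGrad_nonneg {d R : ℕ} (u : Zd d → ℝ) (x : Zd d) : 0 ≤ localGrad R u x :=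
  Finset.sum_nonneg fun _ _ => abs_nonneg _

theorem abs_sub_le_localGrad_of_Adj {d R : ℕ} {u : Zd d → ℝ} {x a b : Zd d}
    (ha : a ∈ bdry d R) (hb : b ∈ bdry d R) (hab : Adj a b) (hx : a ∈ cubeAt 3 x) :
    |u a - u b| ≤ localGrad R u x := by
  rw [abs_sub_comm]
  exact Finset.single_le_sum (f := fun e : Zd d × Zd d => |u e.2 - u e.1|)
    (fun _ _ => abs_nonneg _)
    (Finset.mem_filter.2 ⟨mem_Etan.2 ⟨ha, hb, hab⟩, hx⟩ : (a, b) ∈ _)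

/-- Two points on a common face can be joined by a path moving one coordinate at a time. -/
theorem abs_sub_le_mul_localGrad_of_face {d R : ℕ} {u : Zd d → ℝ} {x : Zd d} {i : Fin d}
    (n : ℕ) : ∀ {a b : Zd d}, a ∈ bdry d R → b ∈ bdry d R → a ∈ cubeAt 3 x → b ∈ cubeAt 3 x →
    a i = b i → |a i| = R → ∑ j, (a j - b j).natAbs = n → |u a - u b| ≤ n * localGrad R u x := by
  induction n with
  | zero =>
    intro a b _ _ _ _ _ _ hn
    have : a = b := by
      funext j
      have := (Finset.sum_eq_zero_iff.1 hn) j (Finset.mem_univ j)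
      omega
    simp [this]
  | succ n ih =>
    intro a b ha hb hax hbx hi hiR hn
    obtain ⟨j, hj⟩ : ∃ j, a j ≠ b j := by
      by_contra! hcon
      simp [hcon] at hn
    have hij : i ≠ j := fun h => hj (h ▸ hi)
    obtain ⟨σ, hσ, hσn⟩ : ∃ σ : ℤ, (σ = 1 ∨ σ = -1) ∧
        (a j + σ - b j).natAbs + 1 = (a j - b j).natAbs ∧
        (a j ≤ a j + σ ∧ a j + σ ≤ b j ∨ b j ≤ a j + σ ∧ a j + σ ≤ a j) := by
      rcases lt_or_gt_of_ne hj with h | h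
      · exact ⟨1, Or.inl rfl, by omega, by omega⟩
      · exact ⟨-1, Or.inr rfl, by omega, by omega⟩
    obtain ⟨hσ1, hσ2⟩ := hσn
    set a' : Zd d := Function.update a j (a j + σ) with ha'
    have hj' : a' j = a j + σ := by simp [ha']
    have hk' : ∀ k, k ≠ j → a' k = a k := fun k hk => by simp [ha', hk]
    have hbd : a' ∈ bdry d R := by
      refine mem_bdry.2 ⟨fun k => ?_, i, by rw [hk' i hij, hiR]⟩
      by_cases hk : k = j
      · subst hk
        have h1 := abs_le.1 ((mem_bdry.1 ha).1 k)
        have h2 := abs_le.1 ((mem_bdry.1 hb).1 k)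
        rw [hj', abs_le]; omega
      · rw [hk' k hk]; exact (mem_bdry.1 ha).1 k
    have hcx : a' ∈ cubeAt 3 x := by
      refine mem_cubeAt.2 fun k => ?_
      by_cases hk : k = j
      · subst hk
        have h1 := abs_le.1 (mem_cubeAt.1 hax k)
        have h2 := abs_le.1 (mem_cubeAt.1 hbx k)
        rw [hj', abs_le]; omega
      · rw [hk' k hk]; exact mem_cubeAt.1 hax k
    have hadj : Adj a a' := by
      refine ⟨j, ?_⟩
      rcases hσ with rfl | rfl
      · left
        funext k
        by_cases hk : k = j
        · subst hk; simp [hj', unitVec]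
        · simp [hk' k hk, unitVec, hk]
      · right
        funext k
        by_cases hk : k = j
        · subst hk; simp [hj', unitVec]
        · simp [hk' k hk, unitVec, hk]
    have hsum : ∑ k, (a' k - b k).natAbs = n := by
      rw [Fintype.sum_eq_add_sum_compl j] at hn ⊢
      rw [Finset.sum_congr rfl (g := fun k => (a k - b k).natAbs) fun k hk => by
        rw [hk' k (by simpa using hk)], hj']
      omega
    calc |u a - u b| ≤ |u a - u a'| + |u a' - u b| := abs_sub_le _ _ _
      _ ≤ localGrad R u x + n * localGrad R u x :=
          add_le_add (abs_sub_le_localGrad_of_Adj ha hbd hadj hax)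
            (ih hbd hb hcx hbx (by rw [hk' i hij, hi]) (by rw [hk' i hij, hiR]) hsum)
      _ = _ := by push_cast; ring

theorem abs_sub_le_localGrad_of_face {d R : ℕ} {u : Zd d → ℝ} {x a b : Zd d} {i : Fin d}
    (ha : a ∈ bdry d R) (hb : b ∈ bdry d R) (hax : a ∈ cubeAt 3 x) (hbx : b ∈ cubeAt 3 x)
    (hi : a i = b i) (hiR : |a i| = R) : |u a - u b| ≤ 6 * d * localGrad R u x := by
  refine (abs_sub_le_mul_localGrad_of_face _ ha hb hax hbx hi hiR rfl).trans ?_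
  refine mul_le_mul_of_nonneg_right ?_ (localGrad_nonneg u x)
  have h : ∑ j, (a j - b j).natAbs ≤ d * 6 := by
    refine (Finset.sum_le_card_nsmul _ _ 6 fun j _ => ?_).trans_eq (by simp)
    have h1 := abs_le.1 (mem_cubeAt.1 hax j)
    have h2 := abs_le.1 (mem_cubeAt.1 hbx j)
    omega
  calc ((∑ j, (a j - b j).natAbs : ℕ) : ℝ) ≤ ((d * 6 : ℕ) : ℝ) := by exact_mod_cast h
    _ = 6 * d := by push_cast; ring

theorem update_mem_bdry {d R : ℕ} {a : Zd d} {i j : Fin d} {t : ℤ} (ha : a ∈ bdry d R)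
    (hij : i ≠ j) (hi : |a i| = R) (ht : |t| ≤ R) : Function.update a j t ∈ bdry d R := by
  refine mem_bdry.2 ⟨fun k => ?_, i, by simpa [hij] using hi⟩
  by_cases hk : k = j
  · subst hk; simpa using ht
  · simpa [hk] using (mem_bdry.1 ha).1 k

theorem update_mem_cubeAt {d K : ℕ} {a x : Zd d} {j : Fin d} {t : ℤ} (ha : a ∈ cubeAt K x)
    (ht : |t - x j| ≤ K) : Function.update a j t ∈ cubeAt K x := by
  refine mem_cubeAt.2 fun k => ?_
  by_cases hk : k = j
  · subst hk; simpa using ht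
  · simpa [hk] using mem_cubeAt.1 ha k

theorem abs_sub_le_localGrad_of_faces {d R : ℕ} {u : Zd d → ℝ} {x a b : Zd d} {i j : Fin d}
    (ha : a ∈ bdry d R) (hb : b ∈ bdry d R) (hax : a ∈ cubeAt 3 x) (hbx : b ∈ cubeAt 3 x)
    (hij : i ≠ j) (hi : |a i| = R) (hj : |b j| = R) :
    |u a - u b| ≤ 12 * d * localGrad R u x := by
  have hw := update_mem_bdry ha hij hi hj.le
  have hwx := update_mem_cubeAt hax (mem_cubeAt.1 hbx j)
  have h1 := abs_sub_le_localGrad_of_face (u := u) ha hw hax hwx (by simp [hij]) hi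
  have h2 := abs_sub_le_localGrad_of_face (u := u) (i := j) hw hb hwx hbx (by simp) (by simpa using hj)
  have := abs_sub_le (u a) (u (Function.update a j (b j))) (u b)
  linarith

/-- Nearby boundary points can be joined by a short path in the boundary. -/
theorem abs_sub_le_localGrad {d R : ℕ} (hd : 2 ≤ d) {u : Zd d → ℝ} {x y : Zd d}
    (hx : x ∈ bdry d R) (hy : y ∈ bdry d R) (h : y ∈ cubeAt 3 x) :
    |u x - u y| ≤ 18 * d * localGrad R u x := by
  obtain ⟨hx1, i, hi⟩ := mem_bdry.1 hx
  obtain ⟨hy1, j, hj⟩ := mem_bdry.1 hy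
  have h0 : 0 ≤ d * localGrad R u x := mul_nonneg (Nat.cast_nonneg d) (localGrad_nonneg u x)
  by_cases hij : i = j
  · subst hij
    by_cases hxy : x i = y i
    · have := abs_sub_le_localGrad_of_face (u := u) hx hy (self_mem_cubeAt x) h hxy hi
      linarith
    · have : Nontrivial (Fin d) := Fin.nontrivial_iff_two_le.2 hd
      obtain ⟨k, hk⟩ := exists_ne i
      have hR : 2 * R ≤ 3 := by
        have := mem_cubeAt.1 h i
        rcases (abs_eq (by positivity)).1 hi with e | e <;>
        rcases (abs_eq (by positivity)).1 hj with e' | e' <;>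
        rw [e, e', abs_le] at this <;> omega
      have hw := update_mem_bdry (t := R) hx hk.symm hi (by simp)
      have hwx : Function.update x k (R : ℤ) ∈ cubeAt 3 x := by
        refine update_mem_cubeAt (self_mem_cubeAt x) ?_
        have := abs_le.1 (hx1 k)
        rw [abs_le]; omega
      have h1 := abs_sub_le_localGrad_of_face (u := u) hx hw (self_mem_cubeAt x) hwx
        (by simp [hk.symm]) hi
      have h2 := abs_sub_le_localGrad_of_faces (u := u) hw hy hwx h hk (by simp) hj
      have := abs_sub_le (u x) (u (Function.update x k (R : ℤ))) (u y)
      linarith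
  · have := abs_sub_le_localGrad_of_faces (u := u) hx hy (self_mem_cubeAt x) h hij hi hj
    linarith

/-- The smoothing operator on `∂D_R` at scale `L`: average the radial projections of all the
translates by vectors in a cube of radius `L`. -/
def smoothOp (d R L : ℕ) : (Zd d → ℝ) →ₗ[ℝ] (Zd d → ℝ) where
  toFun u x := ((cubeAt L (0 : Zd d)).card : ℝ)⁻¹ * ∑ v ∈ cubeAt L 0, u (radProj R (x + v))
  map_add' u w := by
    funext x
    simp [Finset.sum_add_distrib, mul_add]
  map_smul' c u := by
    funext x
    simp only [Pi.smul_apply, smul_eq_mul, ← Finset.mul_sum, RingHom.id_apply]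
    ring

theorem smoothOp_apply {d R L : ℕ} (u : Zd d → ℝ) (x : Zd d) :
    smoothOp d R L u x =
      ((cubeAt L (0 : Zd d)).card : ℝ)⁻¹ * ∑ v ∈ cubeAt L 0, u (radProj R (x + v)) := rfl

theorem card_cubeAt_pos {d L : ℕ} : (0 : ℝ) < (cubeAt L (0 : Zd d)).card := by
  rw [card_cubeAt]; positivity

theorem card_bdry_mul_le {d R L : ℕ} {ε : ℝ} (hd : 1 ≤ d) (hR : 0 < R) (hε : 0 < ε)
    (h : ε * R ≤ 2 * L + 1) :
    ((bdry d R).card : ℝ) * (2 * L + 1) ≤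
      2 * d * 3 ^ d * ε ^ (-((d : ℝ) - 1)) * (cubeAt L (0 : Zd d)).card := by
  obtain ⟨k, rfl⟩ := Nat.exists_eq_add_of_le' hd
  have e : -(((k + 1 : ℕ) : ℝ) - 1) = -(k : ℝ) := by push_cast; ring
  rw [e, Real.rpow_neg hε.le, Real.rpow_natCast, card_cubeAt]
  have h1 : ((bdry (k + 1) R).card : ℝ) ≤ 2 * (k + 1 : ℕ) * (2 * R + 1) ^ k := by
    exact_mod_cast card_bdry_le (d := k + 1) (R := R)
  have hR1 : (1 : ℝ) ≤ R := by exact_mod_cast hR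
  have h2 : (2 * (R : ℝ) + 1) ^ k ≤ (3 * ((2 * L + 1) / ε)) ^ k := by
    refine pow_le_pow_left₀ (by positivity) ?_ k
    have : (R : ℝ) ≤ (2 * L + 1) / ε := by rw [le_div_iff₀ hε]; linarith
    linarith
  calc ((bdry (k + 1) R).card : ℝ) * (2 * L + 1)
      ≤ (2 * (k + 1 : ℕ) * (3 * ((2 * L + 1) / ε)) ^ k) * (2 * L + 1) := by
        refine mul_le_mul_of_nonneg_right (h1.trans ?_) (by positivity)
        exact mul_le_mul_of_nonneg_left h2 (by positivity)
    _ = 2 * (k + 1 : ℕ) * 3 ^ k * (ε ^ k)⁻¹ * (2 * L + 1) ^ (k + 1) := by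
        rw [mul_pow, div_pow]; ring
    _ ≤ 2 * (k + 1 : ℕ) * 3 ^ (k + 1) * (ε ^ k)⁻¹ * (2 * L + 1) ^ (k + 1) := by
        gcongr
        · norm_num
        · omega
    _ = _ := by push_cast; ring

/-- The common constant of the smoothing estimates. -/
def smoothConst (d : ℕ) : ℝ := 36 * d ^ 2 * 567 ^ d

theorem smoothConst_pos {d : ℕ} (hd : 0 < d) : 0 < smoothConst d := by
  unfold smoothConst; positivity

theorem one_le_rpow_scale {d : ℕ} {ε : ℝ} (hd : 1 ≤ d) (hε : 0 < ε) (hε1 : ε ≤ 1) :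
    1 ≤ ε ^ (-((d : ℝ) - 1)) := by
  have : (1 : ℝ) ≤ d := by exact_mod_cast hd
  exact Real.one_le_rpow_of_pos_of_le_one_of_nonpos hε hε1 (by linarith)

theorem le_smoothConst {d : ℕ} (hd : 1 ≤ d) : (189 : ℝ) ^ d * 3 ^ d * (36 * d) ≤ smoothConst d := by
  have h : (1 : ℝ) ≤ d := by exact_mod_cast hd
  rw [smoothConst, ← mul_pow]
  norm_num
  nlinarith [pow_pos (show (0 : ℝ) < 567 by norm_num) d,
    mul_nonneg (pow_pos (show (0 : ℝ) < 567 by norm_num) d).le (mul_nonneg (sub_nonneg.2 h)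
      (by linarith : (0 : ℝ) ≤ d))]

section Estimates

variable {d R L : ℕ}

theorem card_filter_cubeAt_bdry_le (y : Zd d) :
    ((bdry d R).filter fun x => x ∈ cubeAt 3 y).card ≤ 7 ^ d := by
  refine (Finset.card_le_card (t := cubeAt 3 y) fun x hx => (Finset.mem_filter.1 hx).2).trans ?_
  rw [card_cubeAt]

theorem supAbs_add_pos {x v : Zd d} (hR : 0 < R) (hL : 4 * L ≤ R) (hx : x ∈ bdry d R)
    (hv : v ∈ cubeAt L 0) : 0 < supAbs (x + v) := by
  have := supAbs_add_bounds hx hv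
  omega

theorem abs_smoothOp_le {x : Zd d} (u : Zd d → ℝ) (hR : 0 < R) (hL : 4 * L ≤ R)
    (hx : x ∈ bdry d R) :
    |smoothOp d R L u x| ≤ ((cubeAt L (0 : Zd d)).card : ℝ)⁻¹ *
      ∑ v ∈ cubeAt L 0, ∑ y ∈ bdry d R with y ∈ cubeAt 3 (radProj R (x + v)), |u y| := by
  rw [smoothOp_apply, abs_mul, abs_of_pos (inv_pos.2 card_cubeAt_pos)]
  refine mul_le_mul_of_nonneg_left ?_ (inv_pos.2 card_cubeAt_pos).le
  refine (Finset.abs_sum_le_sum_abs _ _).trans (Finset.sum_le_sum fun v hv => ?_)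
  refine Finset.single_le_sum (f := fun y => |u y|) (fun _ _ => abs_nonneg _)
    (Finset.mem_filter.2 ⟨radProj_mem_bdry (supAbs_add_pos hR hL hx hv), self_mem_cubeAt _⟩)

theorem abs_radProj_sub_le {u : Zd d → ℝ} {x y v w : Zd d} (hd : 2 ≤ d) (hR : 0 < R)
    (hL : 4 * L ≤ R) (hx : x ∈ bdry d R) (hy : y ∈ bdry d R) (hv : v ∈ cubeAt L 0)
    (hw : w ∈ cubeAt L 0) (h : y + w ∈ cubeAt 1 (x + v)) :
    |u (radProj R (x + v)) - u (radProj R (y + w))| ≤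
      18 * d * localGrad R u (radProj R (x + v)) := by
  have h1 := supAbs_add_bounds hx hv
  have h2 := supAbs_add_bounds hy hw
  exact abs_sub_le_localGrad hd (radProj_mem_bdry (by omega)) (radProj_mem_bdry (by omega))
    (radProj_mem_cubeAt hR (by omega) (by omega) h)

theorem abs_grad_smoothOp_le {e : Zd d × Zd d} (u : Zd d → ℝ) (hd : 2 ≤ d) (hR : 0 < R)
    (hL : 4 * L ≤ R) (he : e ∈ Etan d R) :
    |smoothOp d R L u e.2 - smoothOp d R L u e.1| ≤
      (((cubeAt L (0 : Zd d)).card : ℝ)⁻¹ * (18 * d)) * ∑ v ∈ cubeAt L 0,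
        ∑ e' ∈ Etan d R with e'.1 ∈ cubeAt 3 (radProj R (e.1 + v)), |u e'.2 - u e'.1| := by
  obtain ⟨h1, h2, h3⟩ := mem_Etan.1 he
  rw [smoothOp_apply, smoothOp_apply, ← mul_sub, ← Finset.sum_sub_distrib, abs_mul,
    abs_of_pos (inv_pos.2 card_cubeAt_pos), mul_assoc, Finset.mul_sum _ _ (18 * (d : ℝ))]
  refine mul_le_mul_of_nonneg_left ?_ (inv_pos.2 card_cubeAt_pos).le
  refine (Finset.abs_sum_le_sum_abs _ _).trans (Finset.sum_le_sum fun v hv => ?_)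
  rw [abs_sub_comm]
  refine abs_radProj_sub_le hd hR hL h1 h2 hv hv (mem_cubeAt.2 fun i => ?_)
  simpa using mem_cubeAt.1 h3.mem_cubeAt i

/-- Coordinatewise truncation of an integer vector to `[-t, t]`. -/
def truncVec (t : ℕ) (v : Zd d) : Zd d := fun i => max (-t) (min t (v i))

theorem truncVec_mem_cubeAt {t : ℕ} (ht : t ≤ L) (v : Zd d) : truncVec t v ∈ cubeAt L 0 :=
  mem_cubeAt.2 fun i => by
    simp only [truncVec, Pi.zero_apply, sub_zero, abs_le]
    omega

theorem truncVec_succ_mem_cubeAt (t : ℕ) (x v : Zd d) :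
    x + truncVec (t + 1) v ∈ cubeAt 1 (x + truncVec t v) :=
  mem_cubeAt.2 fun i => by
    simp only [truncVec, Pi.add_apply, abs_le]
    push_cast
    omega

theorem truncVec_zero (v : Zd d) : truncVec 0 v = 0 := by
  funext i; simp [truncVec]

theorem truncVec_of_mem {v : Zd d} (hv : v ∈ cubeAt L 0) : truncVec L v = v := by
  funext i
  have := abs_le.1 (mem_cubeAt.1 hv i)
  simp only [Pi.zero_apply, sub_zero] at this
  simp only [truncVec]
  omega

theorem abs_sub_smoothOp_le {x : Zd d} (u : Zd d → ℝ) (hd : 2 ≤ d) (hR : 0 < R)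
    (hL : 4 * L ≤ R) (hx : x ∈ bdry d R) :
    |u x - smoothOp d R L u x| ≤
      (((cubeAt L (0 : Zd d)).card : ℝ)⁻¹ * (18 * d)) * ∑ p ∈ cubeAt L 0 ×ˢ Finset.range L,
        ∑ e ∈ Etan d R with e.1 ∈ cubeAt 3 (radProj R (x + truncVec p.2 p.1)),
          |u e.2 - u e.1| := by
  have hu : u x = ((cubeAt L (0 : Zd d)).card : ℝ)⁻¹ * ∑ v ∈ cubeAt L (0 : Zd d), u x := by
    rw [Finset.sum_const, nsmul_eq_mul, inv_mul_cancel_left₀ card_cubeAt_pos.ne']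
  rw [hu, smoothOp_apply, ← mul_sub, ← Finset.sum_sub_distrib, abs_mul,
    abs_of_pos (inv_pos.2 card_cubeAt_pos), mul_assoc, Finset.mul_sum _ _ (18 * (d : ℝ)),
    Finset.sum_product]
  refine mul_le_mul_of_nonneg_left ?_ (inv_pos.2 card_cubeAt_pos).le
  refine (Finset.abs_sum_le_sum_abs _ _).trans (Finset.sum_le_sum fun v hv => ?_)
  have htel := Finset.sum_range_sub' (fun t => u (radProj R (x + truncVec t v))) L
  rw [truncVec_zero, truncVec_of_mem hv, add_zero, radProj_of_mem_bdry hx] at htel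
  rw [← htel]
  refine (Finset.abs_sum_le_sum_abs _ _).trans (Finset.sum_le_sum fun t ht => ?_)
  have ht' := Finset.mem_range.1 ht
  exact abs_radProj_sub_le hd hR hL hx hx (truncVec_mem_cubeAt (by omega) v)
    (truncVec_mem_cubeAt (by omega) v) (truncVec_succ_mem_cubeAt t x v)

theorem smoothOp_norm_le {ε : ℝ} (u : Zd d → ℝ) (hd : 2 ≤ d) (hR : 0 < R) (hL : 4 * L ≤ R)
    (hε : 0 < ε) (hε1 : ε ≤ 1) (hεR : ε * R ≤ 2 * L + 1) {s r : ℝ≥0∞} (hs : 1 ≤ s)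
    (hsr : s ≤ r) :
    avNormE r (bdry d R) (smoothOp d R L u) ≤ smoothConst d *
      (ε ^ (-((d : ℝ) - 1))) ^ ((1 / s).toReal - (1 / r).toReal) * avNormE s (bdry d R) u := by
  have hne : (bdry d R).Nonempty := bdry_nonempty (by omega)
  have hB : (0 : ℝ) < (bdry d R).card := by exact_mod_cast hne.card_pos
  have hW : (0 : ℝ) < (cubeAt L (0 : Zd d)).card := card_cubeAt_pos
  have hd1 : (1 : ℝ) ≤ d := by exact_mod_cast (by omega : 1 ≤ d)
  have hM := le_smoothConst (d := d) (by omega)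
  have hQ := one_le_rpow_scale (d := d) (by omega) hε hε1
  have hN : (63 : ℝ) ^ d ≤ smoothConst d := by
    refine le_trans ?_ hM
    calc (63 : ℝ) ^ d ≤ 189 ^ d := by gcongr; norm_num
      _ = 189 ^ d * 1 * 1 := by ring
      _ ≤ 189 ^ d * 3 ^ d * (36 * d) := by
          gcongr
          · exact one_le_pow₀ (by norm_num)
          · linarith
  refine avNormE_le_of_relation hne hne
    (rel := fun v x y => y ∈ cubeAt 3 (radProj R (x + v))) (N := 63 ^ d)
    (N' := 21 ^ d * (2 * L + 1)) (inv_pos.2 hW).le (smoothConst_pos (by omega)) hQ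
    (fun x hx => abs_smoothOp_le u hR hL hx) ?_ ?_ ?_ ?_ ?_ ?_ hs hsr
  · intro v _ x _
    exact_mod_cast (card_filter_cubeAt_bdry_le _).trans (Nat.pow_le_pow_left (by norm_num) d)
  · intro v hv y _
    exact_mod_cast card_mem_cubeAt_radProj_le y hR hL hv
  · intro x hx y _
    exact_mod_cast card_shift_mem_cubeAt_le y hR hL hx
  · rwa [inv_mul_cancel_left₀ hW.ne']
  · rwa [inv_mul_cancel_left₀ hW.ne', mul_div_cancel_right₀ _ hB.ne']
  · rw [inv_mul_le_iff₀ hW, ← mul_div_assoc, le_div_iff₀ hB]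
    calc (21 : ℝ) ^ d * (2 * L + 1) * (bdry d R).card
        = 21 ^ d * ((bdry d R).card * (2 * L + 1)) := by ring
      _ ≤ 21 ^ d * (2 * d * 3 ^ d * ε ^ (-((d : ℝ) - 1)) * (cubeAt L (0 : Zd d)).card) :=
          mul_le_mul_of_nonneg_left (card_bdry_mul_le (by omega) hR hε hεR) (by positivity)
      _ = (21 ^ d * 3 ^ d * (2 * d)) * ((cubeAt L (0 : Zd d)).card * ε ^ (-((d : ℝ) - 1))) := by
          ring
      _ ≤ smoothConst d * ((cubeAt L (0 : Zd d)).card * ε ^ (-((d : ℝ) - 1))) := by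
          refine mul_le_mul_of_nonneg_right (le_trans ?_ hM) (by positivity)
          gcongr <;> norm_num
      _ = _ := by ring

theorem card_filter_Etan_near_le (y : Zd d) :
    ((Etan d R).filter fun e => e.1 ∈ cubeAt 3 y).card ≤ 189 ^ d := by
  refine (card_filter_Etan_le (fun x => x ∈ cubeAt 3 y) (card_filter_cubeAt_bdry_le y)).trans ?_
  rw [← mul_pow]
  exact Nat.pow_le_pow_left (by norm_num) d

theorem grad_smoothOp_norm_le {ε : ℝ} (u : Zd d → ℝ) (hd : 2 ≤ d) (hR : 0 < R)
    (hL : 4 * L ≤ R) (hε : 0 < ε) (hε1 : ε ≤ 1) (hεR : ε * R ≤ 2 * L + 1) {s r : ℝ≥0∞}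
    (hs : 1 ≤ s) (hsr : s ≤ r) :
    avNormE r (Etan d R) (fun e => smoothOp d R L u e.2 - smoothOp d R L u e.1) ≤
      smoothConst d * (ε ^ (-((d : ℝ) - 1))) ^ ((1 / s).toReal - (1 / r).toReal) *
        avNormE s (Etan d R) (fun e => u e.2 - u e.1) := by
  have hpos : 0 < (Etan d R).card :=
    (bdry_nonempty (by omega)).card_pos.trans_le (card_bdry_le_card_Etan hd hR)
  have hne : (Etan d R).Nonempty := Finset.card_pos.1 hpos
  have hB : (0 : ℝ) < (Etan d R).card := by exact_mod_cast hpos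
  have hW : (0 : ℝ) < (cubeAt L (0 : Zd d)).card := card_cubeAt_pos
  have hM := le_smoothConst (d := d) (by omega)
  have hQ := one_le_rpow_scale (d := d) (by omega) hε hε1
  have hd1 : (1 : ℝ) ≤ d := by exact_mod_cast (by omega : 1 ≤ d)
  have hN : 18 * d * (189 : ℝ) ^ d ≤ smoothConst d := by
    refine le_trans ?_ hM
    calc 18 * d * (189 : ℝ) ^ d = 189 ^ d * 1 * (18 * d) := by ring
      _ ≤ 189 ^ d * 3 ^ d * (36 * d) := by
          gcongr
          · exact one_le_pow₀ (by norm_num)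
          · norm_num
  have hE : ((Etan d R).card : ℝ) ≤ 3 ^ d * (bdry d R).card := by exact_mod_cast card_Etan_le
  refine avNormE_le_of_relation hne hne
    (rel := fun v e e' => e'.1 ∈ cubeAt 3 (radProj R (e.1 + v))) (N := 189 ^ d)
    (N' := 21 ^ d * (2 * L + 1)) (by positivity) (smoothConst_pos (by omega)) hQ
    (fun e he => abs_grad_smoothOp_le u hd hR hL he) ?_ ?_ ?_ ?_ ?_ ?_ hs hsr
  · intro v _ x _
    exact_mod_cast card_filter_Etan_near_le _
  · intro v hv e' _
    have := card_filter_Etan_le _ (card_mem_cubeAt_radProj_le e'.1 hR hL hv)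
    rw [← mul_pow] at this
    exact_mod_cast this
  · intro e he e' _
    exact_mod_cast card_shift_mem_cubeAt_le e'.1 hR hL (mem_Etan.1 he).1
  · rwa [show ((cubeAt L (0 : Zd d)).card : ℝ)⁻¹ * (18 * d) *
      ((cubeAt L (0 : Zd d)).card * 189 ^ d) = 18 * d * 189 ^ d by field_simp]
  · rwa [mul_div_cancel_right₀ _ hB.ne', show ((cubeAt L (0 : Zd d)).card : ℝ)⁻¹ * (18 * d) *
      ((cubeAt L (0 : Zd d)).card * 189 ^ d) = 18 * d * 189 ^ d by field_simp]
  · rw [mul_assoc, inv_mul_le_iff₀ hW, ← mul_div_assoc, le_div_iff₀ hB]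
    calc 18 * d * ((21 : ℝ) ^ d * (2 * L + 1)) * (Etan d R).card
        ≤ 18 * d * ((21 : ℝ) ^ d * (2 * L + 1)) * (3 ^ d * (bdry d R).card) := by gcongr
      _ = 18 * d * (21 ^ d * 3 ^ d) * ((bdry d R).card * (2 * L + 1)) := by ring
      _ ≤ 18 * d * (21 ^ d * 3 ^ d) *
            (2 * d * 3 ^ d * ε ^ (-((d : ℝ) - 1)) * (cubeAt L (0 : Zd d)).card) :=
          mul_le_mul_of_nonneg_left (card_bdry_mul_le (by omega) hR hε hεR) (by positivity)
      _ = (36 * d ^ 2 * (21 ^ d * 3 ^ d * 3 ^ d)) *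
            ((cubeAt L (0 : Zd d)).card * ε ^ (-((d : ℝ) - 1))) := by ring
      _ ≤ smoothConst d * ((cubeAt L (0 : Zd d)).card * ε ^ (-((d : ℝ) - 1))) := by
          refine mul_le_mul_of_nonneg_right ?_ (by positivity)
          rw [smoothConst, ← mul_pow, ← mul_pow]
          gcongr
          norm_num
      _ = _ := by ring

theorem sub_smoothOp_norm_le {ε : ℝ} (u : Zd d → ℝ) (hd : 2 ≤ d) (hR : 0 < R)
    (hL : 4 * L ≤ R) (hε : 0 < ε) (hεL : L ≤ ε * R) {s : ℝ≥0∞} (hs : 1 ≤ s) :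
    avNormE s (bdry d R) (fun x => u x - smoothOp d R L u x) ≤
      smoothConst d * ε * R * avNormE s (Etan d R) (fun e => u e.2 - u e.1) := by
  have hneA : (bdry d R).Nonempty := bdry_nonempty (by omega)
  have hpos : 0 < (Etan d R).card := hneA.card_pos.trans_le (card_bdry_le_card_Etan hd hR)
  have hne : (Etan d R).Nonempty := Finset.card_pos.1 hpos
  have hA : (0 : ℝ) < (bdry d R).card := by exact_mod_cast hneA.card_pos
  have hB : (0 : ℝ) < (Etan d R).card := by exact_mod_cast hpos
  have hW : (0 : ℝ) < (cubeAt L (0 : Zd d)).card := card_cubeAt_pos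
  have hR' : (0 : ℝ) < R := by exact_mod_cast hR
  have hMp := smoothConst_pos (d := d) (by omega)
  have hN : 18 * d * L * (189 : ℝ) ^ d * 3 ^ d ≤ smoothConst d * ε * R := by
    calc 18 * d * L * (189 : ℝ) ^ d * 3 ^ d = (189 ^ d * 3 ^ d * (18 * d)) * L := by ring
      _ ≤ smoothConst d * (ε * R) := by
          refine mul_le_mul (le_trans ?_ (le_smoothConst (by omega))) hεL (by positivity) hMp.le
          gcongr
          norm_num
      _ = _ := by ring
  have h3 : (1 : ℝ) ≤ 3 ^ d := one_le_pow₀ (by norm_num)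
  have h189 : (1 : ℝ) ≤ 189 ^ d := one_le_pow₀ (by norm_num)
  have hN₁ : 18 * d * L * (189 : ℝ) ^ d ≤ smoothConst d * ε * R :=
    (le_mul_of_one_le_right (by positivity) h3).trans hN
  have hE : ((Etan d R).card : ℝ) ≤ 3 ^ d * (bdry d R).card := by exact_mod_cast card_Etan_le
  have hI : (((cubeAt L (0 : Zd d)) ×ˢ Finset.range L).card : ℝ) =
      (cubeAt L (0 : Zd d)).card * L := by simp [Finset.card_product]
  have hcI : ((cubeAt L (0 : Zd d)).card : ℝ)⁻¹ * (18 * d) *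
      (((cubeAt L (0 : Zd d)) ×ˢ Finset.range L).card * 189 ^ d) = 18 * d * L * 189 ^ d := by
    rw [hI]; field_simp
  have := avNormE_le_of_relation (s := s) (r := s) hneA hne (f := fun x => u x - smoothOp d R L u x)
    (g := fun e => u e.2 - u e.1) (I := cubeAt L (0 : Zd d) ×ˢ Finset.range L)
    (rel := fun p x e => e.1 ∈ cubeAt 3 (radProj R (x + truncVec p.2 p.1)))
    (N := 189 ^ d) (c := ((cubeAt L (0 : Zd d)).card : ℝ)⁻¹ * (18 * d))
    (N' := ((cubeAt L (0 : Zd d)) ×ˢ Finset.range L).card) (M := smoothConst d * ε * R)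
    (Q := (Etan d R).card) (by positivity) (by positivity) (by exact_mod_cast hpos)
    (fun x hx => abs_sub_smoothOp_le u hd hR hL hx) ?_ ?_ ?_ ?_ ?_ ?_ hs le_rfl
  · simpa using this
  · intro v _ x _
    exact_mod_cast card_filter_Etan_near_le _
  · intro p hp e _
    have ht := Finset.mem_range.1 (Finset.mem_product.1 hp).2
    exact_mod_cast (card_mem_cubeAt_radProj_le e.1 hR hL
      (truncVec_mem_cubeAt ht.le p.1)).trans (Nat.pow_le_pow_left (by norm_num) d)
  · intro x _ e _
    exact_mod_cast Finset.card_filter_le _ _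
  · rwa [hcI]
  · rw [hcI, le_div_iff₀ hB]
    calc 18 * d * L * (189 : ℝ) ^ d * (Etan d R).card
        ≤ 18 * d * L * (189 : ℝ) ^ d * (3 ^ d * (bdry d R).card) := by gcongr
      _ = 18 * d * L * (189 : ℝ) ^ d * 3 ^ d * (bdry d R).card := by ring
      _ ≤ _ := by gcongr
  · rw [mul_div_cancel_right₀ _ hB.ne']
    refine le_trans ?_ hN₁
    rw [← hcI]
    refine mul_le_mul_of_nonneg_left ?_ (by positivity)
    exact le_mul_of_one_le_right (by positivity) h189

theorem smoothOp_zero_apply {u : Zd d → ℝ} {x : Zd d} (hx : x ∈ bdry d R) :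
    smoothOp d R 0 u x = u x := by
  have h : cubeAt 0 (0 : Zd d) = {0} := by
    ext v
    simp [mem_cubeAt, funext_iff]
  rw [smoothOp_apply, h]
  simp [radProj_of_mem_bdry hx]

theorem bdry_zero (hd : 0 < d) : bdry d 0 = {0} := by
  ext x
  rw [mem_bdry, Finset.mem_singleton, funext_iff]
  simp only [Nat.cast_zero, abs_nonpos_iff, abs_eq_zero, Pi.zero_apply]
  exact ⟨fun h => h.1, fun h => ⟨h, ⟨0, hd⟩, h _⟩⟩

theorem Etan_zero (hd : 0 < d) : Etan d 0 = ∅ := by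
  refine Finset.eq_empty_of_forall_notMem fun e he => ?_
  obtain ⟨h1, h2, i, hi⟩ := mem_Etan.1 he
  rw [bdry_zero hd, Finset.mem_singleton] at h1 h2
  rw [h1, h2] at hi
  rcases hi with hi | hi <;> simpa [unitVec] using congrFun hi i

theorem smoothOp_zero_zero_norm_le {M Q : ℝ} (u : Zd d → ℝ) (hd : 0 < d) (hM : 1 ≤ M)
    (hQ : 1 ≤ Q) {s r : ℝ≥0∞} (hs : 1 ≤ s) (hsr : s ≤ r) :
    avNormE r (bdry d 0) (smoothOp d 0 0 u) ≤
      M * Q ^ ((1 / s).toReal - (1 / r).toReal) * avNormE s (bdry d 0) u := by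
  have hMQ : 1 ≤ M * Q := one_le_mul_of_one_le_of_one_le hM hQ
  have h0 : smoothOp d 0 0 u 0 = u 0 := smoothOp_zero_apply (by simp [bdry_zero hd])
  rw [bdry_zero hd]
  exact avNormE_le_of_kernel (Finset.singleton_nonempty _) (Finset.singleton_nonempty _)
    (k := fun _ _ => 1) (by simp) (by linarith) hQ (by simp [h0]) (by simpa using hM)
    (by simpa using hM) (by simpa using hMQ) hs hsr

theorem sub_smoothOp_zero_norm_eq {s : ℝ≥0∞} (u : Zd d → ℝ) (hd : 0 < d) (hs : 1 ≤ s) :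
    avNormE s (bdry d 0) (fun x => u x - smoothOp d 0 0 u x) = 0 := by
  have h0 : smoothOp d 0 0 u 0 = u 0 := smoothOp_zero_apply (by simp [bdry_zero hd])
  rw [bdry_zero hd]
  unfold avNormE
  split_ifs with h
  · exact le_antisymm (supNorm_le le_rfl (by simp [h0])) (supNorm_nonneg _ _)
  · have : 0 < s.toReal := ENNReal.toReal_pos (by positivity) h
    simp [avNorm, this.ne', h0]

end Estimates

/-- Corollary `a48a`, existence of smoothing operators on discrete boundaries:
there are `ε₀ ∈ (0,1)`, constants `C₁(s,r), C₂(s) > 0` and linear operators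
`S_{R,ε} : ℝ^{∂D_R} → ℝ^{∂D_R}` satisfying the three smoothing estimates. -/
theorem smoothing_operators_exist (d : ℕ) (hd : 2 ≤ d) :
    ∃ ε₀ : ℝ, ε₀ ∈ Set.Ioo (0 : ℝ) 1 ∧
    ∃ (C₁ : ℝ≥0∞ → ℝ≥0∞ → ℝ) (C₂ : ℝ≥0∞ → ℝ)
      (S : ℕ → ℝ → (Zd d → ℝ) →ₗ[ℝ] (Zd d → ℝ)),
      (∀ s r : ℝ≥0∞, 0 < C₁ s r) ∧ (∀ s : ℝ≥0∞, 0 < C₂ s) ∧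
      ∀ (s r : ℝ≥0∞), 1 ≤ s → s ≤ r →
        ∀ (R : ℕ) (u : Zd d → ℝ) (ε : ℝ), ε ∈ Set.Ioo (0 : ℝ) ε₀ →
          avNormE r (bdry d R) (S R ε u)
              ≤ C₁ s r * ε ^ (-(((d : ℝ) - 1) * ((1 / s).toReal - (1 / r).toReal)))
                  * avNormE s (bdry d R) u ∧
          avNormE r (Etan d R) (fun e => S R ε u e.2 - S R ε u e.1)
              ≤ C₁ s r * ε ^ (-(((d : ℝ) - 1) * ((1 / s).toReal - (1 / r).toReal)))
                  * avNormE s (Etan d R) (fun e => u e.2 - u e.1) ∧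
          avNormE s (bdry d R) (fun x => u x - S R ε u x)
              ≤ C₂ s * ε * R * avNormE s (Etan d R) (fun e => u e.2 - u e.1) := by
  have hM := smoothConst_pos (d := d) (by omega)
  refine ⟨1 / 4, by norm_num, fun _ _ => smoothConst d, fun _ => smoothConst d,
    fun R ε => smoothOp d R ⌊ε * R⌋₊, fun _ _ => hM, fun _ => hM, ?_⟩
  rintro s r hs hsr R u ε ⟨hε, hε4⟩
  have hε1 : ε ≤ 1 := by linarith
  have hQ := one_le_rpow_scale (d := d) (by omega) hε hε1
  rw [← neg_mul, Real.rpow_mul hε.le]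
  rcases Nat.eq_zero_or_pos R with rfl | hR
  · have hM1 : 1 ≤ smoothConst d := by
      refine le_trans ?_ (le_smoothConst (by omega))
      have h1 : (1 : ℝ) ≤ 189 ^ d := one_le_pow₀ (by norm_num)
      have h2 : (1 : ℝ) ≤ 3 ^ d := one_le_pow₀ (by norm_num)
      have h3 : (1 : ℝ) ≤ 36 * d := by
        have : (2 : ℝ) ≤ d := by exact_mod_cast hd
        linarith
      exact one_le_mul_of_one_le_of_one_le (one_le_mul_of_one_le_of_one_le h1 h2) h3
    simp only [Nat.cast_zero, mul_zero, Nat.floor_zero, zero_mul]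
    refine ⟨smoothOp_zero_zero_norm_le u (by omega) hM1 hQ hs hsr, ?_,
      (sub_smoothOp_zero_norm_eq u (by omega) hs).le⟩
    rw [Etan_zero (by omega), avNormE_empty (hs.trans hsr), avNormE_empty hs, mul_zero]
  · have hfl : (⌊ε * R⌋₊ : ℝ) ≤ ε * R := Nat.floor_le (by positivity)
    have hlt := Nat.lt_floor_add_one (ε * (R : ℝ))
    have hR' : (0 : ℝ) < R := by exact_mod_cast hR
    have hL : 4 * ⌊ε * (R : ℝ)⌋₊ ≤ R := by
      have : (4 : ℝ) * ⌊ε * (R : ℝ)⌋₊ ≤ R := by nlinarith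
      exact_mod_cast this
    have hεR : ε * R ≤ 2 * (⌊ε * (R : ℝ)⌋₊ : ℝ) + 1 := by
      have : (0 : ℝ) ≤ ⌊ε * (R : ℝ)⌋₊ := Nat.cast_nonneg _
      linarith
    exact ⟨smoothOp_norm_le u hd hR hL hε hε1 hεR hs hsr,
      grad_smoothOp_norm_le u hd hR hL hε hε1 hεR hs hsr,
      sub_smoothOp_norm_le u hd hR hL hε hfl hs⟩

end
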